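/- arXiv:1605.02571 — 4 statements merged into one kernel-verified Lean document; each statement's English description precedes it below -/
import Mathlib

section
/- Let X be a Tychonoff separably λ-submetrizable space and λ ∈ Ψ. Then X has property S_fin(Λ(λ), Λ(λ)) if and only if C_λ(X) is M-separable. -/
open Set Filter Topology TopologicalSpace ContinuousMap

/-- A subset `A` of `X` is *C-compact* if `f '' A` is compact in `ℝ` for every
continuous real-valued function `f` on `X`. -/
def IsCCompact {X : Type*} [TopologicalSpace X] (A : Set X) : Prop :=
  ∀ f : C(X, ℝ), IsCompact (f '' A)

/-- The `λ`-open (set-open) topology on `C(X, ℝ)`, generated by the subbasic sets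
`[F, U] = {f : f '' F ⊆ U}` for `F ∈ lam` and `U ⊆ ℝ` open. -/
def setOpenTopology {X : Type*} [TopologicalSpace X] (lam : Set (Set X)) :
    TopologicalSpace C(X, ℝ) :=
  TopologicalSpace.generateFrom
    {S | ∃ F ∈ lam, ∃ U : Set ℝ, IsOpen U ∧ S = {f : C(X, ℝ) | f '' F ⊆ U}}

/-- Membership in the collection `Ψ`: a family of nonempty closed C-compact subsets of `X`
forming a π-network, hereditary with respect to (closed) C-compact subsets of its elements,
and maximal among families of nonempty sets inducing the same set-open topology. -/
structure MemPsi {X : Type*} [TopologicalSpace X] (lam : Set (Set X)) : Prop where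
  nonempty : ∀ A ∈ lam, A.Nonempty
  closed : ∀ A ∈ lam, IsClosed A
  ccompact : ∀ A ∈ lam, IsCCompact A
  piNetwork : ∀ U : Set X, IsOpen U → U.Nonempty → ∃ A ∈ lam, A ⊆ U
  hereditary : ∀ A ∈ lam, ∀ B : Set X, B ⊆ A → B.Nonempty → IsClosed B → IsCCompact B →
    B ∈ lam
  maximal : ∀ lam' : Set (Set X), (∀ A ∈ lam', A.Nonempty) →
    setOpenTopology lam' = setOpenTopology lam → lam' ⊆ lam

/-- A cozero (functional open) subset of `X`: the complement of a zero-set. -/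
def IsCozero {X : Type*} [TopologicalSpace X] (U : Set X) : Prop :=
  ∃ f : C(X, ℝ), U = {x | f x ≠ 0}

/-- `𝒰` is a `λ`-f-cover: a family of cozero sets, not containing `X`, such that every
member of `lam` is contained in some member of `𝒰`. -/
def IsFCover {X : Type*} [TopologicalSpace X] (lam : Set (Set X)) (𝒰 : Set (Set X)) : Prop :=
  (Set.univ : Set X) ∉ 𝒰 ∧ (∀ U ∈ 𝒰, IsCozero U) ∧ ∀ A ∈ lam, ∃ U ∈ 𝒰, A ⊆ U

/-- `Λ(λ)`: the collection of all `λ`-f-covers of `X`. -/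
def fCovers {X : Type*} [TopologicalSpace X] (lam : Set (Set X)) : Set (Set (Set X)) :=
  {𝒰 | IsFCover lam 𝒰}

/-- The selection principle `S₁(𝒜, ℬ)`. -/
def S1 {α : Type*} (𝒜 ℬ : Set (Set α)) : Prop :=
  ∀ A : ℕ → Set α, (∀ n, A n ∈ 𝒜) →
    ∃ b : ℕ → α, (∀ n, b n ∈ A n) ∧ Set.range b ∈ ℬ

/-- The selection principle `S_fin(𝒜, ℬ)`. -/
def Sfin {α : Type*} (𝒜 ℬ : Set (Set α)) : Prop :=
  ∀ A : ℕ → Set α, (∀ n, A n ∈ 𝒜) →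
    ∃ B : ℕ → Set α, (∀ n, (B n).Finite ∧ B n ⊆ A n) ∧ (⋃ n, B n) ∈ ℬ

/-- `Ω_y` with respect to the topology `t`: sets having `y` in their closure but not
containing `y`. -/
def OmegaPt {Y : Type*} (t : TopologicalSpace Y) (y : Y) : Set (Set Y) :=
  {A | y ∈ @closure Y t A ∧ y ∉ A}

/-- Countable `(t₁, t₂)`-tightness of a bitopological space. -/
def CountableBiTightness {Y : Type*} (t1 t2 : TopologicalSpace Y) : Prop :=
  ∀ A : Set Y, ∀ f ∈ @closure Y t1 A, ∃ B ⊆ A, B.Countable ∧ f ∈ @closure Y t2 B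

/-- `X` is `λ`-`μ`-Lindelöf: every `λ`-f-cover has a countable subfamily which is a
`μ`-f-cover. -/
def LamMuLindelof {X : Type*} [TopologicalSpace X] (lam mu : Set (Set X)) : Prop :=
  ∀ 𝒰 : Set (Set X), IsFCover lam 𝒰 → ∃ 𝒱 ⊆ 𝒰, 𝒱.Countable ∧ IsFCover mu 𝒱

/-- Countable `(t₁, t₂)`-T-tightness: for every uncountable regular cardinal `κ` and every
increasing `κ`-indexed sequence of `t₁`-closed sets, the union is `t₂`-closed. -/
def CountableBiTTightness {Y : Type*} (t1 t2 : TopologicalSpace Y) : Prop :=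
  ∀ κ : Cardinal.{0}, Cardinal.aleph0 < κ → κ.IsRegular →
    ∀ A : κ.ord.ToType → Set Y, Monotone A → (∀ α, @IsClosed Y t1 (A α)) →
      @IsClosed Y t2 (⋃ α, A α)

/-- `X` is separably `λ`-submetrizable: there is a continuous map of `X` onto a separable
metric space which is one-to-one on `⋃ lam`. -/
def SeparablyLamSubmetrizable (X : Type*) [TopologicalSpace X] (lam : Set (Set X)) : Prop :=
  ∃ (Y : Type) (m : MetricSpace Y),
    @SeparableSpace Y m.toPseudoMetricSpace.toUniformSpace.toTopologicalSpace ∧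
    ∃ f : X → Y,
      @Continuous X Y _ m.toPseudoMetricSpace.toUniformSpace.toTopologicalSpace f ∧
      Function.Surjective f ∧ Set.InjOn f (⋃₀ lam)

/-- `R`-separability for a pair of topologies: from every sequence of `t₁`-dense sets one
can pick single points forming a `t₂`-dense set. -/
def RSepBi {Y : Type*} (t1 t2 : TopologicalSpace Y) : Prop :=
  ∀ D : ℕ → Set Y, (∀ n, @Dense Y t1 (D n)) →
    ∃ d : ℕ → Y, (∀ n, d n ∈ D n) ∧ @Dense Y t2 (Set.range d)

/-- `M`-separability for a pair of topologies. -/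
def MSepBi {Y : Type*} (t1 t2 : TopologicalSpace Y) : Prop :=
  ∀ D : ℕ → Set Y, (∀ n, @Dense Y t1 (D n)) →
    ∃ F : ℕ → Set Y, (∀ n, (F n).Finite ∧ F n ⊆ D n) ∧ @Dense Y t2 (⋃ n, F n)

/-- `H`-separability for a pair of topologies. -/
def HSepBi {Y : Type*} (t1 t2 : TopologicalSpace Y) : Prop :=
  ∀ D : ℕ → Set Y, (∀ n, @Dense Y t1 (D n)) →
    ∃ F : ℕ → Set Y, (∀ n, (F n).Finite ∧ F n ⊆ D n) ∧
      ∀ G : Set Y, @IsOpen Y t2 G → G.Nonempty →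
        ∀ᶠ n in Filter.atTop, (G ∩ F n).Nonempty

/-- A countable set `D` is groupable with respect to the topology `t`. -/
def GroupableIn {Y : Type*} (t : TopologicalSpace Y) (D : Set Y) : Prop :=
  ∃ A : ℕ → Set Y, (∀ n, (A n).Finite) ∧ D = ⋃ n, A n ∧
    ∀ G : Set Y, @IsOpen Y t G → G.Nonempty →
      ∀ᶠ n in Filter.atTop, (G ∩ A n).Nonempty

/-- `GN`-separability for a pair of topologies. -/
def GNSepBi {Y : Type*} (t1 t2 : TopologicalSpace Y) : Prop :=
  ∀ D : ℕ → Set Y, (∀ n, @Dense Y t1 (D n)) →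
    ∃ d : ℕ → Y, (∀ n, d n ∈ D n) ∧ @Dense Y t2 (Set.range d) ∧
      GroupableIn t2 (Set.range d)

/-- The `(t₁, t₂)`-Pytkeev property for a bitopological space. -/
def PytkeevBi {Y : Type*} (t1 t2 : TopologicalSpace Y) : Prop :=
  ∀ A : Set Y, ∀ g ∈ @closure Y t1 A, g ∉ A →
    ∃ B : ℕ → Set Y, (∀ n, (B n).Infinite ∧ B n ⊆ A) ∧
      ∀ G ∈ @nhds Y t2 g, ∃ n, B n ⊆ G

/-- A groupable `μ`-f-cover. -/
def GroupableFCover {X : Type*} [TopologicalSpace X] (mu 𝒱 : Set (Set X)) : Prop :=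
  𝒱.Countable ∧ IsFCover mu 𝒱 ∧
    ∃ G : ℕ → Set (Set X), (∀ m, (G m).Finite) ∧
      (Pairwise fun m k => Disjoint (G m) (G k)) ∧ 𝒱 = ⋃ m, G m ∧
      ∀ F ∈ mu, ∀ᶠ m in Filter.atTop, ∃ U ∈ G m, F ⊆ U

open Set Filter Topology TopologicalSpace ContinuousMap

namespace SfinAux

variable {X : Type*} [TopologicalSpace X]

/-- Hilbert cube. -/
abbrev Cube : Type := ℕ → Icc (0:ℝ) 1

lemma exists_cube_map {lam : Set (Set X)} (hsm : SeparablyLamSubmetrizable X lam) :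
    ∃ φ : X → Cube, Continuous φ ∧ InjOn φ (⋃₀ lam) := by
  obtain ⟨Y, m, hsep, f, hf, -, hinj⟩ := hsm
  rcases isEmpty_or_nonempty Y with hY | hY
  · have hX : IsEmpty X := ⟨fun x => hY.elim (f x)⟩
    exact ⟨fun x => (hX.elim x), continuous_of_const (fun x => hX.elim x),
      fun x => hX.elim x⟩
  let y : ℕ → Y := denseSeq Y
  refine ⟨fun x n => projIcc 0 1 zero_le_one (dist (f x) (y n)), ?_, ?_⟩
  · refine continuous_pi fun n => continuous_projIcc.comp (hf.dist continuous_const)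
  · intro a ha b hb hab
    apply hinj ha hb
    by_contra hne
    have hd : 0 < dist (f a) (f b) := dist_pos.2 hne
    obtain ⟨n, hn⟩ := (denseRange_denseSeq Y).exists_dist_lt (f a)
      (ε := min (dist (f a) (f b) / 2) 1) (by positivity)
    have h1 := congrFun hab n
    have h2 := congrArg Subtype.val h1
    simp only [coe_projIcc] at h2
    have ha1 : dist (f a) (y n) < dist (f a) (f b) / 2 := lt_of_lt_of_le hn (min_le_left _ _)
    have ha2 : dist (f a) (y n) < 1 := lt_of_lt_of_le hn (min_le_right _ _)
    have tri := dist_triangle_right (f a) (f b) (y n)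
    have hb1 : dist (f a) (f b) / 2 < dist (f b) (y n) := by linarith
    have ha0 : 0 ≤ dist (f a) (y n) := dist_nonneg
    have hb0 : 0 ≤ dist (f b) (y n) := dist_nonneg
    rw [min_eq_right ha2.le, max_eq_right ha0] at h2
    rw [max_eq_right (le_min zero_le_one hb0)] at h2
    rcases min_choice (1:ℝ) (dist (f b) (y n)) with h | h <;> rw [h] at h2 <;> linarith

lemma isCompact_of_mem [T35Space X] {A : Set X} (hc : IsCCompact A) (φ : X → Cube)
    (hφ : Continuous φ) (hinj : InjOn φ A) : IsCompact A := by
  letI : MetricSpace Cube := metrizableSpaceMetric Cube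
  -- a positive function on `A` is bounded below
  have key : ∀ h : C(X, ℝ), (∀ x ∈ A, 0 < h x) → ∃ δ > 0, ∀ x ∈ A, δ ≤ h x := by
    intro h hpos
    rcases A.eq_empty_or_nonempty with rfl | hne
    · exact ⟨1, one_pos, by simp⟩
    · obtain ⟨_, ⟨x, hx, rfl⟩, hm⟩ := (hc h).exists_isLeast (hne.image _)
      exact ⟨h x, hpos x hx, fun z hz => hm ⟨z, hz, rfl⟩⟩
  rw [isCompact_iff_ultrafilter_le_nhds]
  intro u hu
  have huA : A ∈ u := by simpa using hu
  obtain ⟨q, -, hq⟩ := isCompact_univ.ultrafilter_le_nhds (u.map φ) (by simp)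
  have hlim : Tendsto φ u (𝓝 q) := hq
  have hqA : ∃ a ∈ A, φ a = q := by
    by_contra hno
    push Not at hno
    obtain ⟨δ, hδ, hb⟩ := key ⟨fun x => dist (φ x) q, hφ.dist continuous_const⟩
      (fun x hx => dist_pos.2 (hno x hx))
    have h1 : ∀ᶠ x in (u : Filter X), dist (φ x) q < δ := hlim (Metric.ball_mem_nhds q hδ)
    obtain ⟨x, hx1, hx2⟩ := (h1.and huA).exists
    exact absurd (hb x hx2) (not_le.2 hx1)
  obtain ⟨a, ha, rfl⟩ := hqA
  refine ⟨a, ha, ?_⟩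
  intro V hV
  obtain ⟨W, hWV, hWo, haW⟩ := mem_nhds_iff.1 hV
  obtain ⟨f, hf, hfa, hf1⟩ := CompletelyRegularSpace.completely_regular a Wᶜ
    hWo.isClosed_compl (by simpa using haW)
  by_contra hVu
  have hWu : Wᶜ ∈ u := by
    rw [Ultrafilter.compl_mem_iff_notMem]
    exact fun h => hVu (mem_of_superset h hWV)
  obtain ⟨δ, hδ, hb⟩ := key ⟨fun x => dist (φ x) (φ a) + (1 - (f x : ℝ)),
      (hφ.dist continuous_const).add
        (continuous_const.sub (continuous_subtype_val.comp hf))⟩ (by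
      intro x hx
      show 0 < dist (φ x) (φ a) + (1 - (f x : ℝ))
      have h1 : (f x : ℝ) ≤ 1 := (f x).2.2
      by_cases hxa : x = a
      · subst hxa; rw [hfa]; simp
      · have : 0 < dist (φ x) (φ a) := dist_pos.2 fun h => hxa (hinj hx ha h)
        linarith)
  have h1 : ∀ᶠ x in (u : Filter X), dist (φ x) (φ a) < δ := hlim (Metric.ball_mem_nhds _ hδ)
  obtain ⟨x, ⟨hx1, hx2⟩, hx3⟩ := ((h1.and huA).and hWu).exists
  have h2 : δ ≤ dist (φ x) (φ a) + (1 - (f x : ℝ)) := hb x hx2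
  have h3 : f x = 1 := hf1 hx3
  rw [h3] at h2
  simp at h2
  linarith

lemma isOpen_sub {lam : Set (Set X)} {F : Set X} (hF : F ∈ lam) {U : Set ℝ} (hU : IsOpen U) :
    IsOpen[setOpenTopology lam] {f : C(X, ℝ) | f '' F ⊆ U} :=
  isOpen_generateFrom_of_mem ⟨F, hF, U, hU, rfl⟩

lemma union_mem {lam : Set (Set X)} (hlam : MemPsi lam) {A B : Set X} (hA : A ∈ lam)
    (hB : B ∈ lam) : A ∪ B ∈ lam := by
  refine hlam.maximal (insert (A ∪ B) lam) ?_ ?_ (mem_insert _ _)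
  · rintro C (rfl | hC)
    · exact (hlam.nonempty A hA).inl
    · exact hlam.nonempty C hC
  · apply le_antisymm
    · apply le_generateFrom
      rintro _ ⟨F, hF, U, hU, rfl⟩
      exact isOpen_sub (mem_insert_of_mem _ hF) hU
    · apply le_generateFrom
      rintro _ ⟨F, rfl | hF, U, hU, rfl⟩
      · have : {f : C(X, ℝ) | f '' (A ∪ B) ⊆ U} =
            {f : C(X, ℝ) | f '' A ⊆ U} ∩ {f : C(X, ℝ) | f '' B ⊆ U} := by
          ext f
          simp only [image_union, union_subset_iff, mem_setOf_eq, mem_inter_iff]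
        rw [this]
        let _ := setOpenTopology lam
        exact IsOpen.inter (isOpen_sub hA hU) (isOpen_sub hB hU)
      · exact isOpen_sub hF hU

lemma exists_nbhd [Nonempty X] {lam : Set (Set X)} (hlam : MemPsi lam) {G : Set C(X, ℝ)}
    (hG : IsOpen[setOpenTopology lam] G) : ∀ f ∈ G, ∃ A ∈ lam, ∃ ε > 0,
      ∀ g : C(X, ℝ), (∀ x ∈ A, |g x - f x| < ε) → g ∈ G := by
  have hG' : GenerateOpen
    {S | ∃ F ∈ lam, ∃ U : Set ℝ, IsOpen U ∧ S = {f : C(X, ℝ) | f '' F ⊆ U}} G := hG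
  clear hG
  induction hG' with
  | basic S hS =>
    obtain ⟨F, hF, U, hU, rfl⟩ := hS
    intro f hf
    obtain ⟨δ, hδ, hsub⟩ := (hlam.ccompact F hF f).exists_thickening_subset_open hU hf
    refine ⟨F, hF, δ, hδ, fun g hg => ?_⟩
    rintro _ ⟨x, hx, rfl⟩
    apply hsub
    rw [Metric.mem_thickening_iff]
    exact ⟨f x, ⟨x, hx, rfl⟩, by rw [Real.dist_eq]; exact hg x hx⟩
  | univ =>
    intro f _
    obtain ⟨A, hA, -⟩ := hlam.piNetwork univ isOpen_univ univ_nonempty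
    exact ⟨A, hA, 1, one_pos, fun _ _ => mem_univ _⟩
  | inter S T _ _ ihS ihT =>
    rintro f ⟨hfS, hfT⟩
    obtain ⟨A, hA, ε, hε, h1⟩ := ihS f hfS
    obtain ⟨B, hB, ε', hε', h2⟩ := ihT f hfT
    refine ⟨A ∪ B, union_mem hlam hA hB, min ε ε', lt_min hε hε', fun g hg => ⟨h1 g ?_, h2 g ?_⟩⟩
    · exact fun x hx => (hg x (Or.inl hx)).trans_le (min_le_left _ _)
    · exact fun x hx => (hg x (Or.inr hx)).trans_le (min_le_right _ _)
  | sUnion K _ ih =>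
    rintro f ⟨S, hS, hf⟩
    obtain ⟨A, hA, ε, hε, h1⟩ := ih S hS f hf
    exact ⟨A, hA, ε, hε, fun g hg => ⟨S, hS, h1 g hg⟩⟩

lemma dense_approx {lam : Set (Set X)} (hlam : MemPsi lam)
    (hcpt : ∀ A ∈ lam, IsCompact A) {D : Set C(X, ℝ)} (hD : @Dense _ (setOpenTopology lam) D)
    (f : C(X, ℝ)) {A : Set X} (hA : A ∈ lam) {ε : ℝ} (hε : 0 < ε) :
    ∃ d ∈ D, ∀ x ∈ A, |d x - f x| < ε := by
  have hK := hcpt A hA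
  obtain ⟨t, htA, ht⟩ := hK.elim_nhds_subcover (fun x => {z | |f z - f x| < ε / 3})
    (fun x _ => by
      have : IsOpen {z | |f z - f x| < ε / 3} :=
        isOpen_lt (by fun_prop) continuous_const
      exact this.mem_nhds (by simp only [mem_setOf_eq, sub_self, abs_zero]; positivity))
  let B : X → Set X := fun x => A ∩ {z | |f z - f x| ≤ ε / 3}
  have hBlam : ∀ x ∈ A, B x ∈ lam := by
    intro x hx
    have hcl : IsClosed {z | |f z - f x| ≤ ε / 3} := isClosed_le (by fun_prop) continuous_const
    refine hlam.hereditary A hA _ inter_subset_left ⟨x, hx, ?_⟩ ((hlam.closed A hA).inter hcl) ?_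
    · simp only [mem_setOf_eq, sub_self, abs_zero]; positivity
    · exact fun g => (hK.inter_right hcl).image g.continuous
  let G : Set C(X, ℝ) := ⋂ x ∈ t, {g : C(X, ℝ) | g '' (B x) ⊆ Metric.ball (f x) (ε / 2)}
  have hGo : IsOpen[setOpenTopology lam] G := by
    letI := setOpenTopology lam
    exact isOpen_biInter_finset fun x hx => isOpen_sub (hBlam x (htA x hx)) Metric.isOpen_ball
  have hfG : f ∈ G := by
    simp only [G, mem_iInter]
    rintro x hx _ ⟨z, hz, rfl⟩
    rw [Metric.mem_ball, Real.dist_eq]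
    have := hz.2
    simp only [mem_setOf_eq] at this
    linarith
  obtain ⟨d, hdG, hdD⟩ := (@Dense.inter_open_nonempty _ (setOpenTopology lam) _ hD) G hGo ⟨f, hfG⟩
  refine ⟨d, hdD, fun z hz => ?_⟩
  obtain ⟨x, hx, hzx⟩ := mem_iUnion₂.1 (ht hz)
  simp only [mem_setOf_eq] at hzx
  simp only [G, mem_iInter] at hdG
  have h1 := hdG x hx ⟨z, ⟨hz, hzx.le⟩, rfl⟩
  rw [Metric.mem_ball, Real.dist_eq] at h1
  have h2 := abs_sub_le (d z) (f x) (f z)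
  rw [abs_sub_comm (f x)] at h2
  linarith

lemma exists_seq (lam : Set (Set X)) (hcpt : ∀ A ∈ lam, IsCompact A) (φ : X → Cube)
    (hφ : Continuous φ) (hinj : InjOn φ (⋃₀ lam)) :
    ∃ s : ℕ → C(X, ℝ), ∀ g : C(X, ℝ), ∀ A ∈ lam, ∀ ε > 0, ∃ m, ∀ x ∈ A, |s m x - g x| < ε := by
  refine ⟨fun m => (denseSeq C(Cube, ℝ) m).comp ⟨φ, hφ⟩, fun g A hA ε hε => ?_⟩
  haveI : CompactSpace A := isCompact_iff_compactSpace.1 (hcpt A hA)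
  have he : IsClosedEmbedding (fun x : A => φ x) := by
    apply Continuous.isClosedEmbedding (hφ.comp continuous_subtype_val)
    intro a b hab
    exact Subtype.ext (hinj ⟨A, hA, a.2⟩ ⟨A, hA, b.2⟩ hab)
  obtain ⟨G, hG⟩ := ContinuousMap.exists_extension he (g.restrict A)
  obtain ⟨m, hm⟩ := (denseRange_denseSeq C(Cube, ℝ)).exists_dist_lt G hε
  refine ⟨m, fun x hx => ?_⟩
  have h1 : G (φ x) = g x := by
    have := congrArg (fun k : C(A, ℝ) => k ⟨x, hx⟩) hG
    simpa using this
  have h2 := (ContinuousMap.dist_apply_le_dist (f := G) (g := denseSeq C(Cube, ℝ) m) (φ x)).trans_lt hm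
  rw [h1, Real.dist_eq, abs_sub_comm] at h2
  exact h2

lemma select {lam : Set (Set X)} (hS : Sfin (fCovers lam) (fCovers lam))
    (D : ℕ → Set C(X, ℝ)) (f : C(X, ℝ)) (ε : ℝ)
    (hD : ∀ n, ∀ A ∈ lam, ∃ d ∈ D n, ∀ x ∈ A, |d x - f x| < ε) :
    ∃ F : ℕ → Set C(X, ℝ), (∀ n, (F n).Finite ∧ F n ⊆ D n) ∧
      ∀ A ∈ lam, ∃ n, ∃ d ∈ F n, ∀ x ∈ A, |d x - f x| < ε := by
  classical
  let V : C(X, ℝ) → Set X := fun d => {x | |d x - f x| < ε}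
  by_cases h : ∃ n, ∃ d ∈ D n, V d = univ
  · obtain ⟨n, d, hd, hV⟩ := h
    refine ⟨fun k => if k = n then {d} else ∅, fun k => ?_, fun A _ => ⟨n, d, by simp, ?_⟩⟩
    · by_cases hk : k = n
      · subst hk; simpa using hd
      · simp [hk]
    · intro x _
      have : x ∈ V d := hV ▸ mem_univ x
      exact this
  · push Not at h
    obtain ⟨B, hB, hBc⟩ := hS (fun n => V '' D n) (by
      intro n
      refine ⟨?_, ?_, ?_⟩
      · rintro ⟨d, hd, hV⟩
        exact h n d hd hV
      · rintro _ ⟨d, hd, rfl⟩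
        refine ⟨⟨fun x => max 0 (ε - |d x - f x|), by fun_prop⟩, ?_⟩
        ext x
        simp only [V, mem_setOf_eq, ContinuousMap.coe_mk]
        constructor
        · intro hx
          rw [max_eq_right (by linarith)]
          linarith
        · intro hx
          by_contra hc
          exact hx (max_eq_left (by linarith))
      · intro A hA
        obtain ⟨d, hd, hx⟩ := hD n A hA
        exact ⟨V d, ⟨d, hd, rfl⟩, hx⟩)
    have : ∀ n, ∃ F ⊆ D n, F.Finite ∧ V '' F = B n := fun n =>
      exists_subset_image_finite_and.1 ⟨B n, (hB n).2, (hB n).1, rfl⟩ |> fun ⟨F, h1, h2, h3⟩ =>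
        ⟨F, h1, h2, h3.symm⟩
    choose F hF1 hF2 hF3 using this
    refine ⟨F, fun n => ⟨hF2 n, hF1 n⟩, fun A hA => ?_⟩
    obtain ⟨U, hU, hAU⟩ := hBc.2.2 A hA
    obtain ⟨n, hn⟩ := mem_iUnion.1 hU
    rw [← hF3 n] at hn
    obtain ⟨d, hd, rfl⟩ := hn
    exact ⟨n, d, hd, fun x hx => hAU hx⟩

lemma forward {lam : Set (Set X)} (hlam : MemPsi lam) (hcpt : ∀ A ∈ lam, IsCompact A)
    (φ : X → Cube) (hφ : Continuous φ) (hinj : InjOn φ (⋃₀ lam))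
    (hS : Sfin (fCovers lam) (fCovers lam)) :
    MSepBi (setOpenTopology lam) (setOpenTopology lam) := by
  intro D hD
  rcases isEmpty_or_nonempty X with hX | hX
  · have hne : ∀ n, ∃ d, d ∈ D n := fun n =>
      @Dense.nonempty _ (setOpenTopology lam) _ ⟨0⟩ (hD n)
    choose d hd using hne
    refine ⟨fun n => {d n}, fun n => ⟨finite_singleton _, by simpa using hd n⟩, ?_⟩
    intro g
    apply @subset_closure _ (setOpenTopology lam)
    have : g = d 0 := by ext x; exact hX.elim x
    exact mem_iUnion.2 ⟨0, this⟩
  obtain ⟨s, hs⟩ := exists_seq lam hcpt φ hφ hinj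
  let e : ℕ → ℕ → ℕ → ℕ := fun m k l => Nat.pair m (Nat.pair k l)
  have hsel : ∀ m k : ℕ, _ := fun m k =>
    select hS (fun l => D (e m k l)) (s m) (1 / ((k : ℝ) + 1))
      (fun l A hA => dense_approx hlam hcpt (hD _) (s m) hA (by positivity))
  choose F hF1 hF2 using hsel
  refine ⟨fun n => F n.unpair.1 n.unpair.2.unpair.1 n.unpair.2.unpair.2, fun n => ?_, ?_⟩
  · have := hF1 n.unpair.1 n.unpair.2.unpair.1 n.unpair.2.unpair.2
    simpa [e] using this
  · letI := setOpenTopology lam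
    rw [dense_iff_inter_open]
    rintro G hG ⟨g, hg⟩
    obtain ⟨A, hA, ε, hε, hsub⟩ := exists_nbhd hlam hG g hg
    obtain ⟨m, hm⟩ := hs g A hA (ε / 2) (by positivity)
    obtain ⟨k, hk⟩ := exists_nat_one_div_lt (show (0:ℝ) < ε / 2 by positivity)
    obtain ⟨l, d, hd, hdx⟩ := hF2 m k A hA
    refine ⟨d, hsub d fun x hx => ?_, mem_iUnion.2 ⟨e m k l, by simpa [e] using hd⟩⟩
    have h1 := hm x hx
    have h2 := hdx x hx
    have h3 := abs_sub_le (d x) (s m x) (g x)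
    linarith

lemma backward [Nonempty X] {lam : Set (Set X)} (hlam : MemPsi lam)
    (hM : MSepBi (setOpenTopology lam) (setOpenTopology lam)) :
    Sfin (fCovers lam) (fCovers lam) := by
  intro 𝒰 h𝒰
  obtain ⟨F, hF, hFd⟩ := hM (fun n => {f | ∃ U ∈ 𝒰 n, ∀ x ∉ U, f x = 1}) (by
    intro n
    letI := setOpenTopology lam
    rw [dense_iff_inter_open]
    rintro G hG ⟨g, hg⟩
    obtain ⟨A, hA, ε, hε, hsub⟩ := exists_nbhd hlam hG g hg
    obtain ⟨U, hU, hAU⟩ := (h𝒰 n).2.2 A hA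
    obtain ⟨u, hu⟩ := (h𝒰 n).2.1 U hU
    obtain ⟨δ, hδ, hb⟩ : ∃ δ > 0, ∀ x ∈ A, δ ≤ |u x| := by
      let v : C(X, ℝ) := ⟨fun x => |u x|, by fun_prop⟩
      obtain ⟨_, ⟨x, hx, rfl⟩, hm⟩ :=
        (hlam.ccompact A hA v).exists_isLeast ((hlam.nonempty A hA).image _)
      refine ⟨v x, ?_, fun z hz => hm ⟨z, hz, rfl⟩⟩
      have : x ∈ U := hAU hx
      rw [hu] at this
      exact abs_pos.2 this
    refine ⟨⟨fun x => min 1 (|u x| / δ) * g x + (1 - min 1 (|u x| / δ)), by fun_prop⟩,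
      hsub _ fun x hx => ?_, U, hU, fun x hx => ?_⟩
    · have : min 1 (|u x| / δ) = 1 := min_eq_left ((one_le_div hδ).2 (hb x hx))
      simp only [ContinuousMap.coe_mk, this]
      simpa using hε
    · have : u x = 0 := by
        rw [hu] at hx
        simpa using hx
      simp [this])
  have hch : ∀ n, ∀ f : C(X, ℝ), ∃ U, f ∈ F n → U ∈ 𝒰 n ∧ ∀ x ∉ U, f x = 1 := by
    intro n f
    by_cases hf : f ∈ F n
    · obtain ⟨U, h1, h2⟩ := (hF n).2 hf
      exact ⟨U, fun _ => ⟨h1, h2⟩⟩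
    · exact ⟨∅, fun h => absurd h hf⟩
  choose W hW using hch
  have hsub : ∀ n, W n '' F n ⊆ 𝒰 n := by
    rintro n _ ⟨f, hf, rfl⟩
    exact (hW n f hf).1
  refine ⟨fun n => W n '' F n, fun n => ⟨(hF n).1.image _, hsub n⟩, ?_, ?_, ?_⟩
  · intro h
    obtain ⟨n, hn⟩ := mem_iUnion.1 h
    exact (h𝒰 n).1 (hsub n hn)
  · intro U h
    obtain ⟨n, hn⟩ := mem_iUnion.1 h
    exact (h𝒰 n).2.1 U (hsub n hn)
  · intro A hA
    obtain ⟨f, hfA, hfF⟩ := (@Dense.inter_open_nonempty _ (setOpenTopology lam) _ hFd)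
      {f : C(X, ℝ) | f '' A ⊆ Iio 1} (isOpen_sub hA isOpen_Iio)
      ⟨0, by rintro _ ⟨x, _, rfl⟩; simp⟩
    obtain ⟨n, hn⟩ := mem_iUnion.1 hfF
    refine ⟨W n f, mem_iUnion.2 ⟨n, f, hn, rfl⟩, fun x hx => ?_⟩
    by_contra hxW
    have h1 := (hW n f hn).2 x hxW
    have h2 : f x < 1 := hfA ⟨x, hx, rfl⟩
    linarith

end SfinAux

/-- For a Tychonoff separably `λ`-submetrizable space `X` and `λ ∈ Ψ`:
`X` has property `S_fin(Λ(λ), Λ(λ))` iff `C_λ(X)` is M-separable. -/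
theorem sfin_fCovers_iff_mSep_single
    {X : Type*} [TopologicalSpace X] [T35Space X]
    (lam : Set (Set X)) (hlam : MemPsi lam)
    (hsm : SeparablyLamSubmetrizable X lam) :
    Sfin (fCovers lam) (fCovers lam) ↔
      MSepBi (setOpenTopology lam) (setOpenTopology lam) := by
  obtain ⟨φ, hφ, hinj⟩ := SfinAux.exists_cube_map hsm
  have hcpt : ∀ A ∈ lam, IsCompact A := fun A hA =>
    SfinAux.isCompact_of_mem (hlam.ccompact A hA) φ hφ
      (hinj.mono (subset_sUnion_of_mem hA))
  refine ⟨fun h => SfinAux.forward hlam hcpt φ hφ hinj h, fun h => ?_⟩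
  rcases isEmpty_or_nonempty X with hX | hX
  · intro 𝒰 _
    refine ⟨fun _ => ∅, fun n => ⟨finite_empty, empty_subset _⟩, by simp, by simp, ?_⟩
    intro A hA
    obtain ⟨x, -⟩ := hlam.nonempty A hA
    exact hX.elim x
  · exact SfinAux.backward hlam h
end

section
/- Let X be a Tychonoff separably λ-submetrizable space and let λ, μ ∈ Ψ with μ ⊆ λ. If the bitopological space (C(X), τ_μ, τ_λ) is M_{(τ_μ,τ_λ)}-separable and is a (τ_μ,τ_λ)-Pytkeev bispace, then it is R_{(τ_μ,τ_λ)}-separable. -/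
open Set Filter Topology TopologicalSpace ContinuousMap

theorem pick_aux {Y : Type*} (t1 t2 : TopologicalSpace Y) (h12 : t2 ≤ t1)
    (hM : MSepBi t1 t2) (hP : PytkeevBi t1 t2) (s : Y)
    (E : ℕ → Set Y) (hE : ∀ n, @Dense Y t1 (E n)) :
    ∃ d : ℕ → Y, (∀ n, d n ∈ E n) ∧ s ∈ @closure Y t2 (Set.range d) := by
  classical
  have hne : ∀ n, ∃ c, c ∈ E n := fun n =>
    (@Dense.nonempty_iff Y t1 _ (hE n)).2 ⟨s⟩
  choose c hc using hne
  obtain ⟨F, hF, hd⟩ := hM E hE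
  by_cases hs : s ∈ ⋃ n, F n
  · obtain ⟨n, hn⟩ := Set.mem_iUnion.1 hs
    refine ⟨Function.update c n s, fun m => ?_, ?_⟩
    · by_cases hm : m = n
      · subst hm
        simpa using (hF m).2 hn
      · simpa [hm] using hc m
    · exact @subset_closure Y t2 _ _ ⟨n, by simp⟩
  · have hcl : s ∈ @closure Y t1 (⋃ n, F n) := closure.mono h12 (hd s)
    obtain ⟨B, hB, hG⟩ := hP _ s hcl hs
    have hfr : ∀ k, ∃ᶠ n in atTop, (B k ∩ F n).Nonempty := by
      intro k
      rw [Filter.frequently_atTop]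
      intro a
      by_contra hcon
      push Not at hcon
      apply (hB k).1
      refine (Set.Finite.biUnion (Set.finite_lt_nat a) (fun i _ => (hF i).1)).subset ?_
      intro y hy
      obtain ⟨n, hn⟩ := Set.mem_iUnion.1 ((hB k).2 hy)
      refine Set.mem_biUnion (x := n) ?_ hn
      by_contra hlt
      have h0 := hcon n (not_lt.1 hlt)
      have h1 : y ∈ B k ∩ F n := ⟨hy, hn⟩
      rw [h0] at h1
      exact h1
    obtain ⟨φ, hφ, hx⟩ := Filter.extraction_forall_of_frequently hfr
    choose x hx using hx
    refine ⟨Function.extend φ x c, fun n => ?_, ?_⟩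
    · by_cases hn : ∃ k, φ k = n
      · obtain ⟨k, rfl⟩ := hn
        rw [hφ.injective.extend_apply]
        exact (hF _).2 (hx k).2
      · rw [Function.extend_apply' _ _ _ hn]
        exact hc n
    · rw [@mem_closure_iff_nhds Y t2]
      intro G hGs
      obtain ⟨k, hk⟩ := hG G hGs
      exact ⟨x k, hk (hx k).1, φ k, hφ.injective.extend_apply _ _ _⟩

theorem rSep_aux {Y : Type*} (t1 t2 : TopologicalSpace Y) (h12 : t2 ≤ t1) [Nonempty Y]
    (hM : MSepBi t1 t2) (hP : PytkeevBi t1 t2) : RSepBi t1 t2 := by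
  intro D hD
  obtain ⟨F, hF, hd⟩ := hM D hD
  have hcount : (⋃ n, F n).Countable := Set.countable_iUnion fun n => (hF n).1.countable
  obtain ⟨s, hs⟩ := hcount.exists_eq_range (Dense.nonempty hd)
  have key := fun j => pick_aux t1 t2 h12 hM hP (s j) (fun n => D (Nat.pair j n))
    (fun n => hD _)
  choose d hdD hdc using key
  refine ⟨fun m => d m.unpair.1 m.unpair.2, fun m => ?_, ?_⟩
  · simpa using hdD m.unpair.1 m.unpair.2
  · rw [hs] at hd
    have hsub : Set.range s ⊆
        @closure Y t2 (Set.range fun m : ℕ => d m.unpair.1 m.unpair.2) := by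
      rintro _ ⟨j, rfl⟩
      refine Set.mem_of_subset_of_mem (@closure_mono Y t2 _ _ ?_) (hdc j)
      rintro _ ⟨n, rfl⟩
      exact ⟨Nat.pair j n, by simp⟩
    intro y
    exact Set.mem_of_subset_of_mem (@closure_minimal Y t2 _ _ hsub (@isClosed_closure Y t2 _)) (hd y)

/-- For a Tychonoff separably `λ`-submetrizable space `X` and `λ, μ ∈ Ψ` with
`μ ⊆ λ`: if `(C(X), τ_μ, τ_λ)` is `M_{(τ_μ,τ_λ)}`-separable and a `(τ_μ,τ_λ)`-Pytkeev bispace,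
then it is `R_{(τ_μ,τ_λ)}`-separable. -/
theorem mSep_pytkeev_implies_rSep
    {X : Type*} [TopologicalSpace X] [T35Space X]
    (lam mu : Set (Set X)) (hlam : MemPsi lam) (hmu : MemPsi mu) (hsub : mu ⊆ lam)
    (hsm : SeparablyLamSubmetrizable X lam)
    (hM : MSepBi (setOpenTopology mu) (setOpenTopology lam))
    (hP : PytkeevBi (setOpenTopology mu) (setOpenTopology lam)) :
    RSepBi (setOpenTopology mu) (setOpenTopology lam) := by
  refine rSep_aux _ _ ?_ hM hP
  apply TopologicalSpace.generateFrom_anti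
  rintro S ⟨F, hF, U, hU, rfl⟩
  exact ⟨F, hsub hF, U, hU, rfl⟩
end

section
/- Let X be a Tychonoff separably λ-submetrizable space and λ ∈ Ψ. If C_λ(X) is M-separable and is a Pytkeev space, then C_λ(X) is R-separable. -/
open Set Filter Topology TopologicalSpace ContinuousMap

theorem point_selection_aux {Y : Type*} (t : TopologicalSpace Y)
    (hM : MSepBi t t) (hP : PytkeevBi t t) (e : Y) (D : ℕ → Set Y)
    (hD : ∀ n, @Dense Y t (D n)) :
    ∃ d : ℕ → Y, (∀ n, d n ∈ D n) ∧ e ∈ closure (Set.range d) := by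
  have hne : ∀ n, ∃ x, x ∈ D n := fun n =>
    closure_nonempty_iff.mp ⟨e, hD n e⟩
  choose c hc using hne
  obtain ⟨F, hF, hFd⟩ := hM D hD
  by_cases he : ∃ n, e ∈ F n
  · obtain ⟨m, hm⟩ := he
    refine ⟨Function.update c m e, fun n => ?_, subset_closure ⟨m, by simp⟩⟩
    by_cases h : n = m
    · subst h; simpa using (hF n).2 hm
    · simpa [h] using hc n
  · obtain ⟨B, hB, hBG⟩ := hP (⋃ n, F n) e (hFd e) (by simpa using he)
    have hfr : ∀ k, ∃ᶠ n in atTop, (B k ∩ F n).Nonempty := by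
      intro k
      rw [Nat.frequently_atTop_iff_infinite]
      intro hfin
      refine (hB k).1 ((hfin.biUnion (fun n _ => (hF n).1)).subset ?_)
      intro x hx
      obtain ⟨n, hn⟩ := mem_iUnion.mp ((hB k).2 hx)
      exact mem_iUnion₂.mpr ⟨n, ⟨x, hx, hn⟩, hn⟩
    obtain ⟨φ, hφ, hφ'⟩ := extraction_forall_of_frequently hfr
    choose b hb using hφ'
    refine ⟨Function.extend φ b c, fun n => ?_, ?_⟩
    · by_cases h : ∃ k, φ k = n
      · obtain ⟨k, rfl⟩ := h
        rw [hφ.injective.extend_apply]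
        exact (hF _).2 (hb k).2
      · rw [Function.extend_apply' _ _ _ h]
        exact hc n
    · rw [mem_closure_iff_nhds]
      intro G hG
      obtain ⟨k, hk⟩ := hBG G hG
      exact ⟨b k, hk (hb k).1, φ k, hφ.injective.extend_apply _ _ _⟩

theorem rSep_of_mSep_pytkeev_aux {Y : Type*} [Nonempty Y] (t : TopologicalSpace Y)
    (hM : MSepBi t t) (hP : PytkeevBi t t) : RSepBi t t := by
  intro D hD
  obtain ⟨F, hF, hFd⟩ := hM (fun _ => Set.univ) (fun _ => dense_univ)
  have hcount : (⋃ n, F n).Countable := countable_iUnion fun n => (hF n).1.countable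
  obtain ⟨e, he⟩ := hcount.exists_eq_range hFd.nonempty
  have h := fun k => point_selection_aux t hM hP (e k) (fun n => D (Nat.pair k n))
    (fun n => hD _)
  choose d hd hde using h
  refine ⟨fun n => d n.unpair.1 n.unpair.2, fun n => ?_, ?_⟩
  · have := hd n.unpair.1 n.unpair.2
    rwa [Nat.pair_unpair] at this
  · rw [← dense_closure]
    refine hFd.mono ?_
    rw [he]
    rintro _ ⟨k, rfl⟩
    refine closure_mono ?_ (hde k)
    rintro _ ⟨n, rfl⟩
    exact ⟨Nat.pair k n, by simp⟩

/-- For a Tychonoff separably `λ`-submetrizable space `X` and `λ ∈ Ψ`: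
if `C_λ(X)` is M-separable and a Pytkeev space, then `C_λ(X)` is R-separable. -/
theorem mSep_pytkeev_implies_rSep_single
    {X : Type*} [TopologicalSpace X] [T35Space X]
    (lam : Set (Set X)) (hlam : MemPsi lam)
    (hsm : SeparablyLamSubmetrizable X lam)
    (hM : MSepBi (setOpenTopology lam) (setOpenTopology lam))
    (hP : PytkeevBi (setOpenTopology lam) (setOpenTopology lam)) :
    RSepBi (setOpenTopology lam) (setOpenTopology lam) := by
  exact rSep_of_mSep_pytkeev_aux _ hM hP
end

section
/- Let X be a Tychonoff separably λ-submetrizable space and let λ, μ ∈ Ψ with μ ⊆ λ. Then the bitopological space (C(X), τ_μ, τ_λ) is H_{(τ_λ,τ_μ)}-separable if and only if for each sequence (𝒰_n : n ∈ ℕ) of λ-f-covers of X there is a sequence (𝒱_n : n ∈ ℕ) of finite sets such that 𝒱_n ⊆ 𝒰_n for each n, and each F ∈ μ is contained in an element of 𝒱_n for all but finitely many n ∈ ℕ. -/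
open Set Filter Topology TopologicalSpace ContinuousMap

/-- Image of a C-compact set in a metrizable space is closed. -/
lemma aux_image_closed {X Q : Type*} [TopologicalSpace X] [TopologicalSpace Q]
    [MetrizableSpace Q] {A : Set X} (hA : IsCCompact A) (e : C(X, Q)) :
    IsClosed (e '' A) := by
  letI := metrizableSpaceMetric Q
  refine isClosed_of_closure_subset fun p hp => ?_
  let g : C(X, ℝ) := ⟨fun x => dist (e x) p, by fun_prop⟩
  have h0 : (0 : ℝ) ∈ closure (g '' A) := by
    rw [Metric.mem_closure_iff] at hp ⊢
    intro ε hε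
    obtain ⟨_, ⟨a, ha, rfl⟩, hb⟩ := hp ε hε
    refine ⟨g a, ⟨a, ha, rfl⟩, ?_⟩
    rw [dist_comm, Real.dist_0_eq_abs, abs_of_nonneg (show 0 ≤ g a from dist_nonneg)]
    change dist (e a) p < ε
    rwa [dist_comm] at hb
  rw [(hA g).isClosed.closure_eq] at h0
  obtain ⟨a, ha, h⟩ := h0
  exact ⟨a, ha, dist_eq_zero.1 h⟩

lemma aux_compact {X Q : Type*} [TopologicalSpace X] [T35Space X] [TopologicalSpace Q]
    [MetrizableSpace Q] [CompactSpace Q] {A : Set X} (hA : IsCCompact A) (e : C(X, Q))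
    (he : InjOn e A) : IsCompact A := by
  rw [isCompact_iff_ultrafilter_le_nhds]
  intro 𝒰 h𝒰
  have hA𝒰 : A ∈ (𝒰 : Filter X) := le_principal_iff.1 h𝒰
  have key : ∀ h : C(X, unitInterval), ∃ a ∈ A, Tendsto e 𝒰 (𝓝 (e a)) ∧
      Tendsto h 𝒰 (𝓝 (h a)) := by
    intro h
    let p : C(X, Q × unitInterval) := e.prodMk h
    have hc : IsCompact (p '' A) := (aux_image_closed hA p).isCompact
    obtain ⟨_, ⟨a, ha, rfl⟩, hq⟩ := hc.ultrafilter_le_nhds (𝒰.map p)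
      (by rw [le_principal_iff]
          exact mem_map.2 (mem_of_superset hA𝒰 (subset_preimage_image p A)))
    have hq' : Tendsto p 𝒰 (𝓝 (p a)) := hq
    have := (nhds_prod_eq (x := e a) (y := h a)) 
    have hq2 : Tendsto p 𝒰 (𝓝 (e a) ×ˢ 𝓝 (h a)) := this ▸ hq'
    exact ⟨a, ha, hq2.fst, hq2.snd⟩
  obtain ⟨a, ha, hea, -⟩ := key (ContinuousMap.const X 0)
  refine ⟨a, ha, fun U hU => ?_⟩
  obtain ⟨V, hVU, hV, haV⟩ := mem_nhds_iff.1 hU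
  obtain ⟨h, hc, h0, h1⟩ := CompletelyRegularSpace.completely_regular a Vᶜ
    hV.isClosed_compl (by simpa using haV)
  obtain ⟨b, hb, heb, hhb⟩ := key ⟨h, hc⟩
  have hba : b = a := he hb ha (tendsto_nhds_unique heb hea)
  subst hba
  have hlt : {t : unitInterval | t < 1} ∈ 𝓝 (h b) :=
    (isOpen_Iio (a := (1 : unitInterval))).mem_nhds (by
      rw [h0]; exact (zero_lt_one : (0 : unitInterval) < 1))
  have := hhb hlt
  refine mem_of_superset this fun x hx => hVU ?_
  by_contra hxV
  have : h x = 1 := h1 hxV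
  have hx' : h x < 1 := hx
  exact absurd hx' (by rw [this]; exact lt_irrefl _)

lemma aux_cube {X : Type*} [TopologicalSpace X] {lam : Set (Set X)}
    (hsm : SeparablyLamSubmetrizable X lam) [Nonempty X] :
    ∃ e : C(X, ℕ → unitInterval), InjOn e (⋃₀ lam) := by
  obtain ⟨Y, m, hs, f, hf, -, hinj⟩ := hsm
  haveI : Nonempty Y := ‹Nonempty X›.map f
  let e : X → ℕ → unitInterval := fun x i =>
    Set.projIcc (0 : ℝ) 1 zero_le_one (dist (f x) (denseSeq Y i))
  have hec : Continuous e := by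
    refine continuous_pi fun i => ?_
    exact continuous_projIcc.comp (hf.dist continuous_const)
  refine ⟨⟨e, hec⟩, fun x hx y hy hxy => hinj hx hy ?_⟩
  by_contra hne
  have hpos : 0 < dist (f x) (f y) := dist_pos.2 hne
  set δ := min (1 / 2) (dist (f x) (f y) / 2) with hδ
  have hδ0 : 0 < δ := by positivity
  obtain ⟨i, hi⟩ := (denseRange_denseSeq Y).exists_dist_lt (f x) hδ0
  have h1 : (e x i : ℝ) = e y i := congrArg Subtype.val (congrFun hxy i)
  simp only [e, Set.coe_projIcc] at h1
  have htri := dist_triangle_right (f x) (f y) (denseSeq Y i)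
  have a1 : δ ≤ 1/2 := min_le_left _ _
  have a2 : δ ≤ dist (f x) (f y) / 2 := min_le_right _ _
  have n1 : 0 ≤ dist (f x) (denseSeq Y i) := dist_nonneg
  have n2 : 0 ≤ dist (f y) (denseSeq Y i) := dist_nonneg
  rw [min_eq_right (by linarith), max_eq_right n1, max_eq_right (le_min zero_le_one n2)] at h1
  rcases min_choice 1 (dist (f y) (denseSeq Y i)) with h | h <;> rw [h] at h1 <;> linarith

lemma aux_union {X : Type*} [TopologicalSpace X] {lam : Set (Set X)} (hlam : MemPsi lam)
    {A B : Set X} (hA : A ∈ lam) (hB : B ∈ lam) : A ∪ B ∈ lam := by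
  refine hlam.maximal (insert (A ∪ B) lam) ?_ ?_ (mem_insert _ _)
  · rintro C (rfl | hC)
    · exact (hlam.nonempty A hA).inl
    · exact hlam.nonempty C hC
  · apply le_antisymm
    · apply le_generateFrom
      rintro S ⟨F, hF, U, hU, rfl⟩
      exact isOpen_generateFrom_of_mem ⟨F, mem_insert_of_mem _ hF, U, hU, rfl⟩
    · apply le_generateFrom
      rintro S ⟨F, (rfl | hF), U, hU, rfl⟩
      · have : {f : C(X, ℝ) | f '' (A ∪ B) ⊆ U} =
            {f : C(X, ℝ) | f '' A ⊆ U} ∩ {f : C(X, ℝ) | f '' B ⊆ U} := by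
          ext f; simp [image_union]
        rw [this]
        letI := setOpenTopology lam
        exact IsOpen.inter (isOpen_generateFrom_of_mem ⟨A, hA, U, hU, rfl⟩)
          (isOpen_generateFrom_of_mem ⟨B, hB, U, hU, rfl⟩)
      · exact isOpen_generateFrom_of_mem ⟨F, hF, U, hU, rfl⟩

lemma aux_basis {X : Type*} [TopologicalSpace X] [Nonempty X] {lam : Set (Set X)}
    (hlam : MemPsi lam) {G : Set C(X, ℝ)} (hG : @IsOpen _ (setOpenTopology lam) G) :
    ∀ g ∈ G, ∃ A ∈ lam, ∃ ε > 0, ∀ h : C(X, ℝ), (∀ x ∈ A, |h x - g x| < ε) → h ∈ G := by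
  induction hG with
  | basic S hS =>
    obtain ⟨F, hF, U, hU, rfl⟩ := hS
    intro g hg
    obtain ⟨ε, hε, hsub⟩ := (hlam.ccompact F hF g).exists_thickening_subset_open hU hg
    refine ⟨F, hF, ε, hε, fun h hh => ?_⟩
    rintro _ ⟨x, hx, rfl⟩
    exact hsub (Metric.mem_thickening_iff.2 ⟨g x, ⟨x, hx, rfl⟩, by
      rw [Real.dist_eq]; exact hh x hx⟩)
  | univ =>
    intro g _
    obtain ⟨A, hA, -⟩ := hlam.piNetwork univ isOpen_univ univ_nonempty
    exact ⟨A, hA, 1, one_pos, fun _ _ => mem_univ _⟩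
  | inter S T _ _ ihS ihT =>
    rintro g ⟨hgS, hgT⟩
    obtain ⟨A, hA, ε, hε, h1⟩ := ihS g hgS
    obtain ⟨B, hB, δ, hδ, h2⟩ := ihT g hgT
    refine ⟨A ∪ B, aux_union hlam hA hB, min ε δ, lt_min hε hδ, fun h hh => ⟨?_, ?_⟩⟩
    · exact h1 h fun x hx => (hh x (Or.inl hx)).trans_le (min_le_left _ _)
    · exact h2 h fun x hx => (hh x (Or.inr hx)).trans_le (min_le_right _ _)
  | sUnion S _ ih =>
    rintro g ⟨T, hT, hgT⟩
    obtain ⟨A, hA, ε, hε, h1⟩ := ih T hT g hgT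
    exact ⟨A, hA, ε, hε, fun h hh => ⟨T, hT, h1 h hh⟩⟩

lemma aux_nhds {X : Type*} [TopologicalSpace X] {lam : Set (Set X)}
    (hlam : MemPsi lam) {A : Set X} (hA : A ∈ lam) (hAc : IsCompact A) (g : C(X, ℝ))
    {ε : ℝ} (hε : 0 < ε) {D : Set C(X, ℝ)} (hD : @Dense _ (setOpenTopology lam) D) :
    ∃ d ∈ D, ∀ x ∈ A, |d x - g x| < ε := by
  obtain ⟨t, htA, ht⟩ := hAc.elim_nhds_subcover (fun x => {y | |g y - g x| < ε / 3}) (by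
    intro x _
    refine IsOpen.mem_nhds (isOpen_lt (by fun_prop) (by fun_prop)) ?_
    simp; positivity)
  let K : X → Set X := fun x => A ∩ {y | |g y - g x| ≤ ε / 3}
  have hKc : ∀ x, IsClosed {y | |g y - g x| ≤ ε / 3} := fun x =>
    isClosed_le (by fun_prop) (by fun_prop)
  have hK : ∀ x ∈ t, K x ∈ lam := by
    intro x hx
    refine hlam.hereditary A hA _ inter_subset_left ⟨x, htA x hx, ?_⟩
      ((hlam.closed A hA).inter (hKc x)) fun f => (hAc.inter_right (hKc x)).image f.continuous
    simp; positivity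
  letI := setOpenTopology lam
  let G : Set C(X, ℝ) := ⋂ x ∈ t, {f : C(X, ℝ) | f '' (K x) ⊆ Metric.ball (g x) (ε / 2)}
  have hG : IsOpen G := isOpen_biInter_finset fun x hx =>
    isOpen_generateFrom_of_mem ⟨K x, hK x hx, _, Metric.isOpen_ball, rfl⟩
  have hgG : g ∈ G := by
    simp only [G, mem_iInter]
    rintro x hx _ ⟨y, hy, rfl⟩
    rw [Metric.mem_ball, Real.dist_eq]
    have : |g y - g x| ≤ ε / 3 := hy.2
    linarith
  obtain ⟨d, hdG, hd⟩ := hD.inter_open_nonempty G hG ⟨g, hgG⟩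
  refine ⟨d, hd, fun y hy => ?_⟩
  obtain ⟨x, hx, hyx⟩ := mem_iUnion₂.1 (ht hy)
  have hyx' : |g y - g x| < ε / 3 := hyx
  have h1 := (mem_iInter₂.1 hdG x hx) ⟨y, ⟨hy, hyx'.le⟩, rfl⟩
  rw [Metric.mem_ball, Real.dist_eq] at h1
  rw [abs_lt] at *
  constructor <;> linarith [h1.1, h1.2, hyx'.1, hyx'.2]

lemma aux_countable {X : Type*} [TopologicalSpace X] {lam : Set (Set X)}
    (e : C(X, ℕ → unitInterval)) (he : InjOn e (⋃₀ lam))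
    (hc : ∀ A ∈ lam, IsCompact A) :
    ∃ g : ℕ → C(X, ℝ), ∀ (h : C(X, ℝ)), ∀ A ∈ lam, ∀ ε > 0, ∃ k, ∀ x ∈ A,
      |g k x - h x| < ε := by
  refine ⟨fun k => (denseSeq C(ℕ → unitInterval, ℝ) k).comp e, fun h A hA ε hε => ?_⟩
  haveI := isCompact_iff_compactSpace.1 (hc A hA)
  have hemb : IsClosedEmbedding (fun a : A => e a) := by
    refine Continuous.isClosedEmbedding (by fun_prop) fun a b hab => ?_
    exact Subtype.ext (he ⟨A, hA, a.2⟩ ⟨A, hA, b.2⟩ hab)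
  obtain ⟨φ, hφ⟩ := ContinuousMap.exists_extension hemb (h.restrict A)
  obtain ⟨k, hk⟩ := (denseRange_denseSeq C(ℕ → unitInterval, ℝ)).exists_dist_lt φ hε
  refine ⟨k, fun x hx => ?_⟩
  have h1 : φ (e x) = h x := congrArg (fun F : C(A, ℝ) => F ⟨x, hx⟩) hφ
  have h2 := (ContinuousMap.dist_apply_le_dist (f := φ)
    (g := denseSeq C(ℕ → unitInterval, ℝ) k) (e x)).trans_lt hk
  rw [dist_comm, Real.dist_eq, h1] at h2
  exact h2

/-- The covering property also holds for families possibly containing `univ`. -/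
lemma aux_cover {X : Type*} [TopologicalSpace X] {lam mu : Set (Set X)}
    (H : ∀ 𝒰 : ℕ → Set (Set X), (∀ n, IsFCover lam (𝒰 n)) →
        ∃ 𝒱 : ℕ → Set (Set X), (∀ n, (𝒱 n).Finite ∧ 𝒱 n ⊆ 𝒰 n) ∧
          ∀ F ∈ mu, ∀ᶠ n in Filter.atTop, ∃ V ∈ 𝒱 n, F ⊆ V)
    (𝒰 : ℕ → Set (Set X)) (h1 : ∀ n, ∀ U ∈ 𝒰 n, IsCozero U)
    (h2 : ∀ n, ∀ A ∈ lam, ∃ U ∈ 𝒰 n, A ⊆ U) :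
    ∃ 𝒱 : ℕ → Set (Set X), (∀ n, (𝒱 n).Finite ∧ 𝒱 n ⊆ 𝒰 n) ∧
          ∀ F ∈ mu, ∀ᶠ n in Filter.atTop, ∃ V ∈ 𝒱 n, F ⊆ V := by
  classical
  by_cases hall : ∀ n, univ ∈ 𝒰 n
  · exact ⟨fun _ => {univ}, fun n => ⟨finite_singleton _, by simpa using hall n⟩,
      fun F _ => Eventually.of_forall fun n => ⟨univ, rfl, subset_univ _⟩⟩
  push Not at hall
  obtain ⟨m, hm⟩ := hall
  obtain ⟨𝒱, hv1, hv2⟩ := H (fun n => if univ ∈ 𝒰 n then 𝒰 m else 𝒰 n) (by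
    intro n
    by_cases hn : univ ∈ 𝒰 n
    · simp only [hn, if_true]; exact ⟨hm, h1 m, h2 m⟩
    · simp only [hn, if_false]; exact ⟨hn, h1 n, h2 n⟩)
  refine ⟨fun n => if univ ∈ 𝒰 n then {univ} else 𝒱 n, fun n => ?_, fun F hF => ?_⟩
  · by_cases hn : univ ∈ 𝒰 n
    · simp [hn]
    · have := hv1 n
      simp only [hn, if_false] at this ⊢
      exact this
  · filter_upwards [hv2 F hF] with n hn
    by_cases hu : univ ∈ 𝒰 n
    · simp [hu]
    · simpa only [hu, if_false] using hn

/-- For a Tychonoff separably `λ`-submetrizable space `X` and `λ, μ ∈ Ψ` with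
`μ ⊆ λ`: `(C(X), τ_μ, τ_λ)` is `H_{(τ_λ,τ_μ)}`-separable iff for each sequence of `λ`-f-covers
of `X` there are finite subfamilies such that each `F ∈ μ` is contained in an element of `𝒱_n`
for all but finitely many `n`. -/
theorem hSep_iff_fCover_grouping
    {X : Type*} [TopologicalSpace X] [T35Space X]
    (lam mu : Set (Set X)) (hlam : MemPsi lam) (hmu : MemPsi mu) (hsub : mu ⊆ lam)
    (hsm : SeparablyLamSubmetrizable X lam) :
    HSepBi (setOpenTopology lam) (setOpenTopology mu) ↔
      (∀ 𝒰 : ℕ → Set (Set X), (∀ n, IsFCover lam (𝒰 n)) →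
        ∃ 𝒱 : ℕ → Set (Set X), (∀ n, (𝒱 n).Finite ∧ 𝒱 n ⊆ 𝒰 n) ∧
          ∀ F ∈ mu, ∀ᶠ n in Filter.atTop, ∃ V ∈ 𝒱 n, F ⊆ V) := by
  classical
  rcases isEmpty_or_nonempty X with hX | hX
  · constructor
    · intro _ 𝒰 _
      refine ⟨fun _ => ∅, fun n => ⟨finite_empty, empty_subset _⟩, fun F hF => ?_⟩
      obtain ⟨x, -⟩ := hmu.nonempty F hF
      exact hX.elim x
    · intro _ D hD
      have hne : ∀ n, (D n).Nonempty := fun n => by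
        letI := setOpenTopology lam
        exact (hD n).nonempty
      refine ⟨D, fun n => ⟨Set.toFinite _, subset_rfl⟩, fun G _ hG => ?_⟩
      refine Eventually.of_forall fun n => ?_
      obtain ⟨g, hg⟩ := hG
      obtain ⟨d, hd⟩ := hne n
      exact ⟨g, hg, Subsingleton.elim d g ▸ hd⟩
  obtain ⟨e, he⟩ := aux_cube hsm
  have hc : ∀ A ∈ lam, IsCompact A := fun A hA =>
    aux_compact (hlam.ccompact A hA) e (he.mono (subset_sUnion_of_mem hA))
  constructor
  · intro H 𝒰 h𝒰
    obtain ⟨F, hF, hFG⟩ := H (fun n => {d | ∃ U ∈ 𝒰 n, ∀ x ∉ U, d x = 1}) (by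
      intro n
      letI := setOpenTopology lam
      rw [dense_iff_inter_open]
      rintro G hG ⟨g, hg⟩
      obtain ⟨A, hA, ε, hε, hsub⟩ := aux_basis hlam hG g hg
      obtain ⟨-, hcoz, hcov⟩ := h𝒰 n
      obtain ⟨U, hU, hAU⟩ := hcov A hA
      obtain ⟨f, rfl⟩ := hcoz U hU
      obtain ⟨a, ha, hmin⟩ := (hc A hA).exists_isMinOn (hlam.nonempty A hA)
        (f := fun x => |f x|) (by fun_prop)
      have hpos : 0 < |f a| := abs_pos.2 (hAU ha)
      let φ : C(X, ℝ) := ⟨fun x => min 1 (|f x| / |f a|), by fun_prop⟩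
      refine ⟨φ * g + (1 - φ), hsub _ fun x hx => ?_, _, hU, fun x hx => ?_⟩
      · have : φ x = 1 := min_eq_left ((one_le_div hpos).2 (hmin hx))
        simp [this, hε]
      · have hfx : f x = 0 := by simpa using hx
        have : φ x = 0 := by simp [φ, hfx]
        simp [this])
    have hF2 : ∀ n, ∀ d ∈ F n, ∃ U ∈ 𝒰 n, ∀ x ∉ U, d x = 1 := fun n d hd => (hF n).2 hd
    choose! u hu1 hu2 using hF2
    refine ⟨fun n => u n '' F n, fun n => ⟨(hF n).1.image _, ?_⟩, fun K hK => ?_⟩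
    · rintro _ ⟨d, hd, rfl⟩
      exact hu1 n d hd
    · have := hFG {f : C(X, ℝ) | f '' K ⊆ Iio 1}
        (isOpen_generateFrom_of_mem ⟨K, hK, _, isOpen_Iio, rfl⟩)
        ⟨0, by rintro _ ⟨x, hx, rfl⟩; simp⟩
      filter_upwards [this] with n hn
      obtain ⟨d, hdK, hd⟩ := hn
      refine ⟨_, ⟨d, hd, rfl⟩, fun x hx => ?_⟩
      by_contra hxu
      have h1 : d x < 1 := hdK ⟨x, hx, rfl⟩
      rw [hu2 n d hd x hxu] at h1
      exact lt_irrefl _ h1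
  · intro H D hD
    obtain ⟨g, hg⟩ := aux_countable e he hc
    let W : ℕ → ℕ → C(X, ℝ) → Set X := fun k n d => {x | |d x - g k x| < 1 / ((n : ℝ) + 1)}
    have hW : ∀ k n d, IsCozero (W k n d) := by
      intro k n d
      refine ⟨⟨fun x => max 0 (1 / ((n : ℝ) + 1) - |d x - g k x|), by fun_prop⟩, ?_⟩
      ext x
      simp only [W, mem_setOf_eq, ContinuousMap.coe_mk]
      rw [ne_eq, max_eq_left_iff, not_le, sub_pos]
    have key : ∀ k, ∃ 𝒱 : ℕ → Set (Set X), (∀ n, (𝒱 n).Finite ∧ 𝒱 n ⊆ W k n '' D n) ∧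
          ∀ F ∈ mu, ∀ᶠ n in Filter.atTop, ∃ V ∈ 𝒱 n, F ⊆ V := by
      intro k
      refine aux_cover H (fun n => W k n '' D n) ?_ ?_
      · rintro n _ ⟨d, -, rfl⟩
        exact hW k n d
      · intro n A hA
        obtain ⟨d, hd, hdA⟩ := aux_nhds hlam hA (hc A hA) (g k)
          (ε := 1 / ((n : ℝ) + 1)) (by positivity) (hD n)
        exact ⟨_, ⟨d, hd, rfl⟩, hdA⟩
    choose 𝒱 h1 h2 using key
    have hfin : ∀ k n, ∃ S ⊆ D n, S.Finite ∧ W k n '' S = 𝒱 k n := by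
      intro k n
      obtain ⟨S, hS, hS1, hS2⟩ := exists_subset_image_finite_and (s := D n) (f := W k n)
        (p := fun T => T = 𝒱 k n) |>.1 ⟨𝒱 k n, (h1 k n).2, (h1 k n).1, rfl⟩
      exact ⟨S, hS, hS1, hS2⟩
    choose S hS1 hS2 hS3 using hfin
    refine ⟨fun n => ⋃ k ∈ Finset.range (n + 1), S k n, fun n => ⟨?_, ?_⟩, ?_⟩
    · exact (Finset.range (n + 1)).finite_toSet.biUnion fun k _ => hS2 k n
    · exact iUnion₂_subset fun k _ => hS1 k n
    · rintro G hG ⟨h, hh⟩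
      obtain ⟨B, hB, ε, hε, hsubG⟩ := aux_basis hmu hG h hh
      obtain ⟨k, hk⟩ := hg h B (hsub hB) (ε / 2) (half_pos hε)
      obtain ⟨N, hN⟩ := exists_nat_one_div_lt (half_pos hε)
      filter_upwards [h2 k B hB, eventually_ge_atTop k, eventually_ge_atTop N] with n hn hkn hNn
      obtain ⟨V, hV, hBV⟩ := hn
      rw [← hS3] at hV
      obtain ⟨d, hd, rfl⟩ := hV
      refine ⟨d, hsubG d fun x hx => ?_, mem_iUnion₂.2 ⟨k, by simp; omega, hd⟩⟩
      have a1 : |d x - g k x| < 1 / ((n : ℝ) + 1) := hBV hx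
      have a2 := hk x hx
      have a3 : 1 / ((n : ℝ) + 1) ≤ 1 / ((N : ℝ) + 1) := Nat.one_div_le_one_div hNn
      have a4 := abs_sub_le (d x) (g k x) (h x)
      linarith
end
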